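/- arXiv:2305.12553 — 2 statements merged into one kernel-verified Lean document; each statement's English description precedes it below -/
import Mathlib

section
/- (Proposition 1: Markov congestion games are Markov α-potential games.) Consider the Markov congestion game G_mcg described in the context. For each policy profile π, let Φ(·,π) : S → ℝ be the unique solution of Φ(s,π) = φ(s,π) + δ·∑_{s'∈S} P^π(s'|s)·Φ(s',π), where φ(s,π) = ∑_{a∈A} π(s,a)·φ(s,a) and φ(s,a) = ∑_{e∈E} ∑_{j=1}^{w_e(a)·n/D} c_e(s, j·D/n) is Rosenthal's potential of the stage game at state s. Suppose M ≥ 0 satisfies Φ(s,π) ≤ M for every state s and every profile π. Then for every state s, every player i, all policies π_i, π_i' of player i, and every π_{-i}: |(Φ(s,(π_i',π_{-i})) − Φ(s,(π_i,π_{-i}))) − (V_i(s,(π_i',π_{-i})) − V_i(s,(π_i,π_{-i})))| ≤ 2·ζ·|S|·D·δ·|E|·M / (n·(1−δ)); that is, G_mcg is a Markov α-potential game with α = 2ζ|S|Dδ|E|M/(n(1−δ)) and α-potential function Φ. -/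
open Finset

section MarkovGameDefs

variable {S : Type*} {I : Type*} {A : I → Type*}

/-- A probability vector on a finite set. -/
def IsProbVec {α : Type*} [Fintype α] (p : α → ℝ) : Prop :=
  (∀ a, 0 ≤ p a) ∧ ∑ a, p a = 1

/-- A stationary policy profile: each player's policy gives a probability vector at each state. -/
def IsPolicy [Fintype I] [∀ i, Fintype (A i)] (π : ∀ i, S → A i → ℝ) : Prop :=
  ∀ i s, IsProbVec (π i s)

/-- A transition kernel. -/
def IsKernel [Fintype S] (P : S → (∀ i, A i) → S → ℝ) : Prop :=
  ∀ s a, IsProbVec (fun s' => P s a s')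

/-- Product distribution on joint actions induced by a profile. -/
noncomputable def jointDist [Fintype I] (π : ∀ i, S → A i → ℝ) (s : S) (a : ∀ i, A i) : ℝ :=
  ∏ i, π i s (a i)

/-- Induced transition matrix `P^π`. -/
noncomputable def transMat [Fintype S] [Fintype I] [DecidableEq I] [∀ i, Fintype (A i)]
    (P : S → (∀ i, A i) → S → ℝ) (π : ∀ i, S → A i → ℝ) (s s' : S) : ℝ :=
  ∑ a : ∀ j, A j, jointDist π s a * P s a s'

/-- Expected one-stage payoff `u(s,π)`. -/
noncomputable def expPay [Fintype I] [DecidableEq I] [∀ i, Fintype (A i)]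
    (u : S → (∀ i, A i) → ℝ) (π : ∀ i, S → A i → ℝ) (s : S) : ℝ :=
  ∑ a : ∀ j, A j, jointDist π s a * u s a

/-- `V` solves the Bellman equation for payoff `u`, kernel `P`, discount `δ`, profile `π`. -/
def IsValueFun [Fintype S] [Fintype I] [DecidableEq I] [∀ i, Fintype (A i)]
    (δ : ℝ) (P : S → (∀ i, A i) → S → ℝ) (u : S → (∀ i, A i) → ℝ)
    (π : ∀ i, S → A i → ℝ) (V : S → ℝ) : Prop :=
  ∀ s, V s = expPay u π s + δ * ∑ s', transMat P π s s' * V s'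

/-- Player `i`'s Q-function, given a value function `V` for player `i` under `π`. -/
noncomputable def Qfun [Fintype S] [Fintype I] [DecidableEq I] [∀ i, Fintype (A i)]
    [∀ i, DecidableEq (A i)]
    (δ : ℝ) (P : S → (∀ i, A i) → S → ℝ) (u : S → (∀ i, A i) → ℝ)
    (π : ∀ i, S → A i → ℝ) (V : S → ℝ) (i : I) (s : S) (ai : A i) : ℝ :=
  ∑ a : ∀ j, A j,
    if a i = ai then
      (∏ j ∈ Finset.univ.erase i, π j s (a j)) * (u s a + δ * ∑ s', P s a s' * V s')
    else 0

/-- Discounted state visitation distribution `d_μ^π`. -/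
noncomputable def dvisit [Fintype S] [DecidableEq S] [Fintype I] [DecidableEq I]
    [∀ i, Fintype (A i)]
    (δ : ℝ) (P : S → (∀ i, A i) → S → ℝ) (π : ∀ i, S → A i → ℝ) (μ : S → ℝ) (s : S) : ℝ :=
  (1 - δ) * ∑' k : ℕ, δ ^ k * ∑ s0, μ s0 * ((Matrix.of (transMat P π)) ^ k) s0 s

/-- Negative entropy `ν(p) = ∑ p log p` (with the convention `0 log 0 = 0`,
which holds automatically since `Real.log 0 = 0`). -/
noncomputable def negent {α : Type*} [Fintype α] (p : α → ℝ) : ℝ :=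
  ∑ a, p a * Real.log (p a)

/-- `Ṽ` solves the Bellman equation of the `τ`-smoothed game for player `i`. -/
def IsSmoothedValueFun [Fintype S] [Fintype I] [DecidableEq I] [∀ i, Fintype (A i)]
    (δ τ : ℝ) (P : S → (∀ i, A i) → S → ℝ) (u : S → (∀ i, A i) → ℝ)
    (π : ∀ i, S → A i → ℝ) (i : I) (Vt : S → ℝ) : Prop :=
  ∀ s, Vt s = expPay u π s - τ * negent (π i s) + δ * ∑ s', transMat P π s s' * Vt s'

/-- Smoothed Q-function `Q̃_i(s,a_i;π)`. -/
noncomputable def Qsmooth [Fintype S] [Fintype I] [DecidableEq I] [∀ i, Fintype (A i)]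
    [∀ i, DecidableEq (A i)]
    (δ τ : ℝ) (P : S → (∀ i, A i) → S → ℝ) (u : S → (∀ i, A i) → ℝ)
    (π : ∀ i, S → A i → ℝ) (Vt : S → ℝ) (i : I) (s : S) (ai : A i) : ℝ :=
  ∑ a : ∀ j, A j,
    if a i = ai then
      (∏ j ∈ Finset.univ.erase i, π j s (a j)) *
        (u s a - τ * negent (π i s) + δ * ∑ s', P s a s' * Vt s')
    else 0

/-- Euclidean (ℓ²) norm on `α → ℝ`. -/
noncomputable def l2norm {α : Type*} [Fintype α] (f : α → ℝ) : ℝ :=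
  Real.sqrt (∑ a, f a ^ 2)

/-- Standard inner product on `α → ℝ`. -/
noncomputable def dotp {α : Type*} [Fintype α] (f g : α → ℝ) : ℝ :=
  ∑ a, f a * g a

/-- `y` is the Euclidean orthogonal projection of `x` onto the probability simplex. -/
noncomputable def IsProjSimplex {α : Type*} [Fintype α] (x y : α → ℝ) : Prop :=
  IsProbVec y ∧ ∀ z, IsProbVec z → l2norm (fun a => y a - x a) ≤ l2norm (fun a => z a - x a)

/-- Softmax (smoothed best response) with temperature `τ`. -/
noncomputable def softmax {α : Type*} [Fintype α] (τ : ℝ) (q : α → ℝ) (a : α) : ℝ :=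
  Real.exp (q a / τ) / ∑ a', Real.exp (q a' / τ)

end MarkovGameDefs

section CongestionDefs

variable {S E I : Type*} {A : I → Type*}

/-- Number of players using resource `e` under joint action `a`. -/
def nUsers [Fintype I] [DecidableEq E] (act : ∀ i, A i → Finset E)
    (a : ∀ i, A i) (e : E) : ℕ :=
  (Finset.univ.filter (fun i => e ∈ act i (a i))).card

/-- Aggregate usage `w_e(a) = (D/n) · |{i : e ∈ a_i}|`. -/
noncomputable def waggr [Fintype I] [DecidableEq E] (act : ∀ i, A i → Finset E)
    (D : ℝ) (a : ∀ i, A i) (e : E) : ℝ :=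
  D / (Fintype.card I) * (nUsers act a e)

/-- One-stage congestion payoff `u_i(s,a) = ∑_{e ∈ a_i} c_e(s, w_e(a))`. -/
noncomputable def congPay [Fintype I] [DecidableEq E] (act : ∀ i, A i → Finset E)
    (D : ℝ) (c : E → S → ℝ → ℝ) (i : I) (s : S) (a : ∀ i, A i) : ℝ :=
  ∑ e ∈ act i (a i), c e s (waggr act D a e)

/-- Rosenthal's potential of the stage game:
`φ(s,a) = ∑_{e∈E} ∑_{j=1}^{w_e(a)·n/D} c_e(s, j·D/n)`. -/
noncomputable def rosenthal [Fintype I] [Fintype E] [DecidableEq E]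
    (act : ∀ i, A i → Finset E) (D : ℝ) (c : E → S → ℝ → ℝ) (s : S) (a : ∀ i, A i) : ℝ :=
  ∑ e : E, ∑ j ∈ Finset.Icc 1 (nUsers act a e), c e s (j * D / (Fintype.card I))

end CongestionDefs

/-!
In every state, Rosenthal's potential is the payoff of player `i` plus the Rosenthal potential of
the game played by the other players, which does not depend on the action of `i`. Taking discounted
sums, `Ψ = Φ - Vᵢ` is therefore the value function of one stage payoff, the same before and after
a deviation of player `i`: the deviation affects `Ψ` only through the transition matrix. One player
moves each of the `|E|` usages by at most `D / n`, so each entry of the transition matrix moves by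
at most `ζ |E| D / n`. As `0 ≤ Ψ ≤ M`, the Bellman equations of the two profiles differ by at most
`δ |S| (ζ |E| D / n) M`, and discounting turns this into a factor `1 / (1 - δ)`.
-/

namespace IsProbVec

variable {α : Type*} [Fintype α] {p f : α → ℝ} {B : ℝ}

lemma sum_mul_le (hp : IsProbVec p) (hf : ∀ a, f a ≤ B) : ∑ a, p a * f a ≤ B :=
  calc ∑ a, p a * f a ≤ ∑ a, p a * B :=
        sum_le_sum fun a _ => mul_le_mul_of_nonneg_left (hf a) (hp.1 a)
    _ = B := by rw [← sum_mul, hp.2, one_mul]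

lemma abs_sum_mul_le_sum_mul_abs (hp : IsProbVec p) (f : α → ℝ) :
    |∑ a, p a * f a| ≤ ∑ a, p a * |f a| := by
  refine (abs_sum_le_sum_abs _ _).trans_eq (sum_congr rfl fun a _ => ?_)
  rw [abs_mul, abs_of_nonneg (hp.1 a)]

lemma abs_sum_mul_le (hp : IsProbVec p) (hf : ∀ a, |f a| ≤ B) : |∑ a, p a * f a| ≤ B :=
  (hp.abs_sum_mul_le_sum_mul_abs f).trans (hp.sum_mul_le hf)

lemma sum_mul_sub_const (hp : IsProbVec p) (f : α → ℝ) (b : ℝ) :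
    ∑ a, p a * (f a - b) = ∑ a, p a * f a - b := by
  simp only [mul_sub, sum_sub_distrib, ← sum_mul, hp.2, one_mul]

lemma pi {ι : Type*} [Fintype ι] [DecidableEq ι] {β : ι → Type*} [∀ i, Fintype (β i)]
    {p : ∀ i, β i → ℝ} (hp : ∀ i, IsProbVec (p i)) :
    IsProbVec fun b : ∀ i, β i => ∏ i, p i (b i) where
  left b := prod_nonneg fun i _ => (hp i).1 (b i)
  right := by
    rw [← Fintype.prod_sum]
    exact prod_eq_one fun i _ => (hp i).2

end IsProbVec

section DiscountedRecursion

variable {S : Type*} [Fintype S] {δ B : ℝ} {T : S → S → ℝ} {h : S → ℝ}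

lemma le_div_one_sub_of_le_add_discounted (hδ : 0 ≤ δ) (hδ1 : δ < 1)
    (hT : ∀ s, IsProbVec (T s)) (hh : ∀ s, h s ≤ B + δ * ∑ s', T s s' * h s') (s : S) :
    h s ≤ B / (1 - δ) := by
  have : Nonempty S := ⟨s⟩
  obtain ⟨m, hm⟩ := Finite.exists_max h
  have hmax : h m ≤ B + δ * h m :=
    (hh m).trans (by gcongr; exact (hT m).sum_mul_le hm)
  refine (hm s).trans ?_
  rw [le_div_iff₀ (sub_pos.2 hδ1)]
  linarith

lemma abs_le_div_one_sub_of_abs_sub_discounted_le (hδ : 0 ≤ δ) (hδ1 : δ < 1)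
    (hT : ∀ s, IsProbVec (T s)) (hh : ∀ s, |h s - δ * ∑ s', T s s' * h s'| ≤ B) (s : S) :
    |h s| ≤ B / (1 - δ) := by
  refine le_div_one_sub_of_le_add_discounted (h := fun s => |h s|) hδ hδ1 hT (fun t => ?_) s
  have hsum : |δ * ∑ t', T t t' * h t'| ≤ δ * ∑ t', T t t' * |h t'| := by
    rw [abs_mul, abs_of_nonneg hδ]
    gcongr
    exact (hT t).abs_sum_mul_le_sum_mul_abs h
  linarith [hh t, abs_sub_abs_le_abs_sub (h t) (δ * ∑ t', T t t' * h t')]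

lemma nonneg_of_discounted_le (hδ : 0 ≤ δ) (hδ1 : δ < 1)
    (hT : ∀ s, IsProbVec (T s)) (hh : ∀ s, δ * ∑ s', T s s' * h s' ≤ h s) (s : S) :
    0 ≤ h s := by
  have hneg : -h s ≤ 0 / (1 - δ) := by
    refine le_div_one_sub_of_le_add_discounted (h := fun s => -h s) hδ hδ1 hT (fun t => ?_) s
    simp only [mul_neg, sum_neg_distrib]
    linarith [hh t]
  simpa using hneg

end DiscountedRecursion

section UnilateralDeviation

variable {S I : Type*} {A : I → Type*} [Fintype I] [DecidableEq I]

lemma jointDist_update_update_mul (π : ∀ i, S → A i → ℝ) (i : I) (q : S → A i → ℝ) (s : S)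
    (a : ∀ j, A j) (x : A i) :
    jointDist (Function.update π i q) s (Function.update a i x) * π i s (a i) =
      jointDist π s a * q s x := by
  have hrest : ∏ j ∈ univ.erase i, Function.update π i q j s (Function.update a i x j) =
      ∏ j ∈ univ.erase i, π j s (a j) :=
    prod_congr rfl fun j hj => by simp only [Function.update_of_ne (ne_of_mem_erase hj)]
  simp only [jointDist, ← mul_prod_erase univ _ (mem_univ i), Function.update_self, hrest]
  ring

variable [∀ i, Fintype (A i)] {π : ∀ i, S → A i → ℝ} {i : I} {q : S → A i → ℝ}
  {u : S → (∀ i, A i) → ℝ}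

lemma expPay_update {s : S} (hπ : ∑ x, π i s x = 1) (q : S → A i → ℝ)
    (u : S → (∀ i, A i) → ℝ) :
    expPay u (Function.update π i q) s =
      ∑ a, jointDist π s a * ∑ x, q s x * u s (Function.update a i x) := by
  -- Exchanging the old and the new action of player `i` is an involution of pairs `(a, x)`.
  have hswap : ∑ z : (∀ j, A j) × A i,
        jointDist (Function.update π i q) s z.1 * π i s z.2 * u s z.1 =
      ∑ z : (∀ j, A j) × A i, jointDist π s z.1 * q s z.2 * u s (Function.update z.1 i z.2) :=
    sum_nbij' (fun z => (Function.update z.1 i z.2, z.1 i))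
      (fun z => (Function.update z.1 i z.2, z.1 i)) (by simp) (by simp) (by simp) (by simp)
      fun ⟨a, x⟩ _ => by simp [← jointDist_update_update_mul π i q]
  simp only [Fintype.sum_prod_type, ← sum_mul, ← mul_sum, hπ, mul_one] at hswap
  simpa only [expPay, mul_assoc, mul_sum] using hswap

lemma expPay_update_eq_of_forall_eq {s : S} (hπ : ∑ x, π i s x = 1) (hq : ∑ x, q s x = 1)
    (hu : ∀ a x, u s (Function.update a i x) = u s a) :
    expPay u (Function.update π i q) s = expPay u π s := by
  rw [expPay_update hπ]
  simp only [hu, ← sum_mul, hq, one_mul, expPay]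

namespace IsPolicy

lemma update (hπ : IsPolicy π) (hq : ∀ s, IsProbVec (q s)) :
    IsPolicy (Function.update π i q) := by
  intro j
  rcases eq_or_ne j i with rfl | hj
  · simpa only [Function.update_self] using hq
  · simpa only [Function.update_of_ne hj] using hπ j

lemma isProbVec_jointDist (hπ : IsPolicy π) (s : S) : IsProbVec (jointDist π s) :=
  IsProbVec.pi fun i => hπ i s

lemma expPay_nonneg (hπ : IsPolicy π) {s : S} (hu : ∀ a, 0 ≤ u s a) : 0 ≤ expPay u π s :=
  sum_nonneg fun a _ => mul_nonneg ((hπ.isProbVec_jointDist s).1 a) (hu a)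

lemma isProbVec_transMat [Fintype S] {P : S → (∀ i, A i) → S → ℝ} (hπ : IsPolicy π)
    (hP : IsKernel P) (s : S) : IsProbVec (transMat P π s) where
  left s' := hπ.expPay_nonneg (u := fun s a => P s a s') fun a => (hP s a).1 s'
  right := by
    simp only [transMat]
    rw [sum_comm]
    simp only [← mul_sum, (hP s _).2, mul_one]
    exact (hπ.isProbVec_jointDist s).2

lemma abs_expPay_update_sub_le (hπ : IsPolicy π) {s : S} (hq : IsProbVec (q s)) {C : ℝ}
    (hu : ∀ a x, |u s (Function.update a i x) - u s a| ≤ C) :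
    |expPay u (Function.update π i q) s - expPay u π s| ≤ C := by
  have hdiff : expPay u (Function.update π i q) s - expPay u π s =
      ∑ a, jointDist π s a * ∑ x, q s x * (u s (Function.update a i x) - u s a) := by
    simp only [hq.sum_mul_sub_const]
    rw [expPay_update (hπ i s).2, expPay]
    simp only [mul_sub, sum_sub_distrib]
  rw [hdiff]
  exact (hπ.isProbVec_jointDist s).abs_sum_mul_le fun a => hq.abs_sum_mul_le (hu a)

end IsPolicy

end UnilateralDeviation

namespace IsValueFun

variable {S I : Type*} [Fintype S] [Fintype I] [DecidableEq I] {A : I → Type*}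
  [∀ i, Fintype (A i)] {δ : ℝ} {P : S → (∀ i, A i) → S → ℝ} {π π' : ∀ i, S → A i → ℝ}
  {u u' : S → (∀ i, A i) → ℝ} {V V' : S → ℝ}

lemma sub (hV : IsValueFun δ P u π V) (hV' : IsValueFun δ P u' π V') :
    IsValueFun δ P (u - u') π (V - V') := by
  intro s
  have hpay : expPay (u - u') π s = expPay u π s - expPay u' π s := by
    simp only [expPay, Pi.sub_apply, mul_sub, sum_sub_distrib]
  simp only [hpay, Pi.sub_apply, mul_sub, sum_sub_distrib]
  linarith [hV s, hV' s]

lemma nonneg (hV : IsValueFun δ P u π V) (hδ : 0 ≤ δ) (hδ1 : δ < 1) (hP : IsKernel P)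
    (hπ : IsPolicy π) (hu : ∀ s a, 0 ≤ u s a) (s : S) : 0 ≤ V s :=
  nonneg_of_discounted_le hδ hδ1 (hπ.isProbVec_transMat hP)
    (fun t => by linarith [hV t, hπ.expPay_nonneg (hu t)]) s

lemma abs_sub_le_of_abs_transMat_sub_le (hV : IsValueFun δ P u π V)
    (hV' : IsValueFun δ P u π' V') (hδ : 0 ≤ δ) (hδ1 : δ < 1) (hP : IsKernel P)
    (hπ' : IsPolicy π') (hpay : ∀ s, expPay u π' s = expPay u π s) {K M : ℝ}
    (hK : ∀ s s', |transMat P π' s s' - transMat P π s s'| ≤ K) (hM : ∀ s, |V s| ≤ M) (s : S) :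
    |V' s - V s| ≤ δ * (Fintype.card S * (K * M)) / (1 - δ) := by
  refine abs_le_div_one_sub_of_abs_sub_discounted_le (h := fun s => V' s - V s) hδ hδ1
    (hπ'.isProbVec_transMat hP) (fun t => ?_) s
  have hresidual : V' t - V t - δ * ∑ t', transMat P π' t t' * (V' t' - V t') =
      δ * ∑ t', (transMat P π' t t' - transMat P π t t') * V t' := by
    simp only [mul_sub, sub_mul, sum_sub_distrib]
    linarith [hV t, hV' t, hpay t]
  rw [hresidual, abs_mul, abs_of_nonneg hδ]
  gcongr
  calc |∑ t', (transMat P π' t t' - transMat P π t t') * V t'|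
      ≤ ∑ _t' : S, K * M := by
        refine (abs_sum_le_sum_abs _ _).trans (sum_le_sum fun t' _ => ?_)
        rw [abs_mul]
        exact mul_le_mul (hK t t') (hM t') (abs_nonneg _) ((abs_nonneg _).trans (hK t t'))
    _ = Fintype.card S * (K * M) := by simp

end IsValueFun

section Congestion

variable {S E I : Type*} {A : I → Type*} [Fintype I] [DecidableEq E]

lemma congPay_nonneg {act : ∀ i, A i → Finset E} {D : ℝ} {c : E → S → ℝ → ℝ}
    (hc : ∀ e s x, 0 ≤ c e s x) (i : I) (s : S) (a : ∀ i, A i) : 0 ≤ congPay act D c i s a :=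
  sum_nonneg fun _ _ => hc _ _ _

variable [DecidableEq I]

/-- The number of players other than `i` using resource `e` under the joint action `a`, which
splits `nUsers` into the share of player `i` and a part that `i` cannot influence. -/
def nOtherUsers (act : ∀ i, A i → Finset E) (i : I) (a : ∀ i, A i) (e : E) : ℕ :=
  #{j ∈ univ.erase i | e ∈ act j (a j)}

/-- Rosenthal's potential of the congestion game played by the players other than `i`. The demand
share of a player is still `D / n`, where `n` counts player `i`. -/
noncomputable def rosenthalOthers [Fintype E] (act : ∀ i, A i → Finset E) (D : ℝ)
    (c : E → S → ℝ → ℝ) (i : I) (s : S) (a : ∀ i, A i) : ℝ :=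
  ∑ e : E, ∑ j ∈ Icc 1 (nOtherUsers act i a e), c e s (j * D / Fintype.card I)

variable (act : ∀ i, A i → Finset E) (i : I)

lemma nUsers_eq_nOtherUsers_add (a : ∀ i, A i) (e : E) :
    nUsers act a e = nOtherUsers act i a e + if e ∈ act i (a i) then 1 else 0 := by
  rw [nUsers, nOtherUsers, ← insert_erase (mem_univ i), filter_insert]
  split_ifs <;> simp

lemma nOtherUsers_update (a : ∀ i, A i) (x : A i) :
    nOtherUsers act i (Function.update a i x) = nOtherUsers act i a := by
  funext e
  refine congrArg card (filter_congr fun j hj => ?_)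
  rw [Function.update_of_ne (ne_of_mem_erase hj)]

lemma abs_waggr_update_sub_le {D : ℝ} (hD : 0 ≤ D) (a : ∀ i, A i) (x : A i) (e : E) :
    |waggr act D (Function.update a i x) e - waggr act D a e| ≤ D / Fintype.card I := by
  have hshare : 0 ≤ D / Fintype.card I := by positivity
  rw [waggr, waggr, nUsers_eq_nOtherUsers_add act i a, nUsers_eq_nOtherUsers_add act i,
    nOtherUsers_update, ← mul_sub, abs_mul, abs_of_nonneg hshare]
  refine mul_le_of_le_one_right hshare ?_
  push_cast
  split_ifs <;> simp

variable [Fintype E]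

lemma rosenthalOthers_update (D : ℝ) (c : E → S → ℝ → ℝ) (s : S) (a : ∀ i, A i) (x : A i) :
    rosenthalOthers act D c i s (Function.update a i x) = rosenthalOthers act D c i s a := by
  simp only [rosenthalOthers, nOtherUsers_update]

lemma rosenthal_sub_congPay (D : ℝ) (c : E → S → ℝ → ℝ) :
    rosenthal act D c - congPay act D c i = rosenthalOthers act D c i := by
  funext s a
  have hpay : congPay act D c i s a =
      ∑ e : E, if e ∈ act i (a i) then c e s (waggr act D a e) else 0 := by
    rw [congPay, sum_ite_mem, univ_inter]
  rw [Pi.sub_apply, Pi.sub_apply, hpay, rosenthal, rosenthalOthers, ← sum_sub_distrib]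
  refine sum_congr rfl fun e _ => ?_
  rw [waggr, nUsers_eq_nOtherUsers_add act i]
  split_ifs
  · rw [sum_Icc_succ_top (by lia), div_mul_eq_mul_div, mul_comm D, add_sub_cancel_right]
  · rw [add_zero, sub_zero]

variable {act i}

lemma rosenthalOthers_nonneg {D : ℝ} {c : E → S → ℝ → ℝ} (hc : ∀ e s x, 0 ≤ c e s x)
    (s : S) (a : ∀ i, A i) : 0 ≤ rosenthalOthers act D c i s a :=
  sum_nonneg fun _ _ => sum_nonneg fun _ _ => hc _ _ _

variable [Fintype S] [∀ i, Fintype (A i)] {π : ∀ j, S → A j → ℝ} {q : S → A i → ℝ}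
  {P : S → (∀ i, A i) → S → ℝ} {D ζ : ℝ}

lemma abs_transMat_update_sub_le (hD : 0 ≤ D) (hζ : 0 ≤ ζ)
    (hLip : ∀ s s' a a',
      |P s a s' - P s a' s'| ≤ ζ * ∑ e, |waggr act D a e - waggr act D a' e|)
    (hπ : IsPolicy π) {s : S} (hq : IsProbVec (q s)) (s' : S) :
    |transMat P (Function.update π i q) s s' - transMat P π s s'| ≤
      ζ * (Fintype.card E * (D / Fintype.card I)) := by
  refine hπ.abs_expPay_update_sub_le (u := fun s a => P s a s') hq fun a x => ?_
  refine (hLip s s' _ _).trans (mul_le_mul_of_nonneg_left ?_ hζ)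
  simpa using sum_le_card_nsmul univ _ _ fun e _ => abs_waggr_update_sub_le act i hD a x e

theorem markov_congestion_game_is_alpha_potential_general {δ M : ℝ} {c : E → S → ℝ → ℝ}
    {V V' Φ Φ' : S → ℝ} (hδ : 0 ≤ δ) (hδ1 : δ < 1) (hD : 0 ≤ D) (hc : ∀ e s x, 0 ≤ c e s x)
    (hP : IsKernel P) (hζ : 0 ≤ ζ)
    (hLip : ∀ s s' a a',
      |P s a s' - P s a' s'| ≤ ζ * ∑ e, |waggr act D a e - waggr act D a' e|)
    (hπ : IsPolicy π) (hq : ∀ s, IsProbVec (q s))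
    (hV : IsValueFun δ P (congPay act D c i) π V)
    (hV' : IsValueFun δ P (congPay act D c i) (Function.update π i q) V')
    (hΦ : IsValueFun δ P (rosenthal act D c) π Φ)
    (hΦ' : IsValueFun δ P (rosenthal act D c) (Function.update π i q) Φ')
    (hM : ∀ s, Φ s ≤ M) (s : S) :
    |(Φ' s - Φ s) - (V' s - V s)| ≤
      ζ * Fintype.card S * D * δ * Fintype.card E * M / (Fintype.card I * (1 - δ)) := by
  have hΨ := hΦ.sub hV
  have hΨ' := hΦ'.sub hV'
  rw [rosenthal_sub_congPay] at hΨ hΨ'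
  have hpay (t : S) : expPay (rosenthalOthers act D c i) (Function.update π i q) t =
      expPay (rosenthalOthers act D c i) π t :=
    expPay_update_eq_of_forall_eq (hπ i t).2 (hq t).2 (rosenthalOthers_update act i D c t)
  have hΨM (t : S) : |(Φ - V) t| ≤ M := by
    rw [abs_of_nonneg (hΨ.nonneg hδ hδ1 hP hπ (rosenthalOthers_nonneg hc) t), Pi.sub_apply]
    linarith [hM t, hV.nonneg hδ hδ1 hP hπ (congPay_nonneg hc i) t]
  have hbound := hΨ.abs_sub_le_of_abs_transMat_sub_le hΨ' hδ hδ1 hP (hπ.update hq) hpay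
    (fun t => abs_transMat_update_sub_le hD hζ hLip hπ (hq t)) hΨM s
  rw [Pi.sub_apply, Pi.sub_apply, sub_sub_sub_comm] at hbound
  refine hbound.trans_eq ?_
  field_simp

end Congestion

/-- **Proposition 1.** Markov congestion games are Markov `α`-potential games with
`α = 2ζ|S|Dδ|E|M/(n(1−δ))` and `α`-potential function the discounted Rosenthal potential. -/
theorem markov_congestion_game_is_alpha_potential
    {S E I : Type*} [Fintype S] [Nonempty S] [DecidableEq S]
    [Fintype E] [Nonempty E] [DecidableEq E]
    [Fintype I] [Nonempty I] [DecidableEq I]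
    {A : I → Type*} [∀ i, Fintype (A i)] [∀ i, Nonempty (A i)] [∀ i, DecidableEq (A i)]
    (δ : ℝ) (hδ : 0 < δ) (hδ1 : δ < 1)
    -- each action is a subset of the resource set E
    (act : ∀ i, A i → Finset E) (hact : ∀ i, Function.Injective (act i))
    (D : ℝ) (hD : 0 < D)
    -- nonnegative state-dependent resource rewards
    (c : E → S → ℝ → ℝ) (hc : ∀ e s x, 0 ≤ c e s x)
    -- the transition depends on actions only through the aggregate usage vector,
    -- and is ζ-Lipschitz in it (ℓ¹ norm)
    (P : S → (∀ i, A i) → S → ℝ) (hP : IsKernel P)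
    (Pbar : S → (E → ℝ) → S → ℝ)
    (hPw : ∀ s a s', P s a s' = Pbar s (waggr act D a) s')
    (ζ : ℝ) (hζ : 0 < ζ)
    (hLip : ∀ (s s' : S) (w w' : E → ℝ),
      |Pbar s w s' - Pbar s w' s'| ≤ ζ * ∑ e, |w e - w' e|)
    -- value functions of the players
    (V : I → (∀ j, S → A j → ℝ) → S → ℝ)
    (hV : ∀ i π, IsPolicy π → IsValueFun δ P (congPay act D c i) π (V i π))
    -- the discounted Rosenthal potential
    (Φ : (∀ j, S → A j → ℝ) → S → ℝ)
    (hΦ : ∀ π, IsPolicy π → IsValueFun δ P (rosenthal act D c) π (Φ π))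
    -- a uniform upper bound on Φ
    (M : ℝ) (hM0 : 0 ≤ M) (hM : ∀ π, IsPolicy π → ∀ s, Φ π s ≤ M) :
    ∀ (s : S) (i : I) (π : ∀ j, S → A j → ℝ), IsPolicy π →
      ∀ (πi' : S → A i → ℝ), (∀ s', IsProbVec (πi' s')) →
        |(Φ (Function.update π i πi') s - Φ π s) -
            (V i (Function.update π i πi') s - V i π s)| ≤
          2 * ζ * (Fintype.card S) * D * δ * (Fintype.card E) * M /
            ((Fintype.card I) * (1 - δ)) := by
  intro s i π hπ q hq
  refine (markov_congestion_game_is_alpha_potential_general hδ.le hδ1 hD.le hc hP hζ.le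
    (fun s s' a a' => by simpa only [hPw] using hLip s s' _ _) hπ hq (hV i π hπ)
    (hV i _ (hπ.update hq)) (hΦ π hπ) (hΦ _ (hπ.update hq)) (hM π hπ) s).trans ?_
  have : 0 < 1 - δ := sub_pos.2 hδ1
  gcongr
  linarith
end

section
/- (Proposition 3, part 1: maximizers of an α-potential function are α-stationary Nash equilibria.) Suppose the finite Markov game is a Markov α-potential game with α-potential function Φ, and suppose π* is a policy profile such that Φ(s,π*) ≥ Φ(s,π) for every state s ∈ S and every profile π. Then π* is an α-stationary Nash equilibrium: for every player i, every policy π_i of player i, and every probability distribution μ on S, V_i(μ,π*) ≥ V_i(μ,(π_i,π*_{-i})) − α. -/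
open Finset

section ApproxPotential

variable {S I : Type*} [DecidableEq I] {E : I → Type*} {X : ∀ i, Set (E i)} {α : ℝ}
  {π : ∀ i, E i}

/-- `φ` is an `α`-potential of the game in strategic form with strategy sets `X i ⊆ E i` and payoffs
`v i`: a unilateral change of strategy changes `φ` and the deviator's payoff by amounts at most `α`
apart. A Markov game with a fixed initial state is such a game, its strategies being the
stationary policies and its payoffs the values at that state. -/
def IsApproxPotential (X : ∀ i, Set (E i)) (v : I → (∀ i, E i) → ℝ) (φ : (∀ i, E i) → ℝ)
    (α : ℝ) : Prop :=
  ∀ i, ∀ π ∈ Set.univ.pi X, ∀ x ∈ X i,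
    |(φ (Function.update π i x) - φ π) - (v i (Function.update π i x) - v i π)| ≤ α

/-- `π` is an `α`-Nash equilibrium of the game with strategy sets `X i ⊆ E i` and payoffs `v i`: no
player gains more than `α` by a unilateral deviation. That `π` itself is a profile of strategies
from `X` is not part of the definition. -/
def IsApproxNash (X : ∀ i, Set (E i)) (v : I → (∀ i, E i) → ℝ) (α : ℝ) (π : ∀ i, E i) : Prop :=
  ∀ i, ∀ x ∈ X i, v i π ≥ v i (Function.update π i x) - α

theorem IsApproxPotential.isApproxNash_of_isMaxOn {v : I → (∀ i, E i) → ℝ} {φ : (∀ i, E i) → ℝ}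
    (hφ : IsApproxPotential X v φ α) (hπ : π ∈ Set.univ.pi X)
    (hmax : IsMaxOn φ (Set.univ.pi X) π) : IsApproxNash X v α π := by
  intro i x hx
  have deviation_mem : Function.update π i x ∈ Set.univ.pi X :=
    (Set.update_mem_pi_iff_of_mem hπ).2 fun _ => hx
  have potential_le : φ (Function.update π i x) ≤ φ π := hmax deviation_mem
  have gain_le := (abs_le.1 (hφ i π hπ x hx)).1
  linarith

theorem IsProbVec.sum_mul_sub_const_s3 [Fintype S] {μ : S → ℝ} (hμ : IsProbVec μ) (f : S → ℝ)
    (c : ℝ) : ∑ s, μ s * (f s - c) = ∑ s, μ s * f s - c := by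
  simp only [mul_sub, sum_sub_distrib, ← sum_mul, hμ.2, one_mul]

theorem IsApproxNash.sum_mul [Fintype S] {V : I → (∀ i, E i) → S → ℝ}
    (hV : ∀ s, IsApproxNash X (fun i σ => V i σ s) α π) {μ : S → ℝ} (hμ : IsProbVec μ) :
    IsApproxNash X (fun i σ => ∑ s, μ s * V i σ s) α π := by
  intro i x hx
  calc ∑ s, μ s * V i (Function.update π i x) s - α
      = ∑ s, μ s * (V i (Function.update π i x) s - α) := (hμ.sum_mul_sub_const_s3 _ α).symm
    _ ≤ ∑ s, μ s * V i π s :=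
        sum_le_sum fun s _ => mul_le_mul_of_nonneg_left (hV s i x hx) (hμ.1 s)

theorem potential_maximizer_is_alpha_nash_general [Fintype S] {V : I → (∀ i, E i) → S → ℝ}
    {Φ : (∀ i, E i) → S → ℝ}
    (hpot : ∀ s, IsApproxPotential X (fun i σ => V i σ s) (fun σ => Φ σ s) α)
    (hπ : π ∈ Set.univ.pi X) (hmax : ∀ s, IsMaxOn (fun σ => Φ σ s) (Set.univ.pi X) π)
    {μ : S → ℝ} (hμ : IsProbVec μ) :
    IsApproxNash X (fun i σ => ∑ s, μ s * V i σ s) α π :=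
  IsApproxNash.sum_mul (fun s => (hpot s).isApproxNash_of_isMaxOn hπ (hmax s)) hμ

end ApproxPotential

section StationaryPolicies

variable (S : Type*) {I : Type*} (A : I → Type*) [∀ i, Fintype (A i)]

/-- The stationary policies of player `i`, as a strategy set inside `S → A i → ℝ`. -/
def stationaryPolicies (i : I) : Set (S → A i → ℝ) :=
  {σ | ∀ s, IsProbVec (σ s)}

variable {S A}

theorem mem_pi_stationaryPolicies [Fintype I] {π : ∀ i, S → A i → ℝ} :
    π ∈ Set.univ.pi (stationaryPolicies S A) ↔ IsPolicy π :=
  Set.mem_univ_pi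

end StationaryPolicies

/-- **Proposition 3, part 1.** Maximizers of an `α`-potential function are
`α`-stationary Nash equilibria. -/
theorem potential_maximizer_is_alpha_nash
    {S I : Type*} [Fintype S] [Nonempty S] [DecidableEq S]
    [Fintype I] [Nonempty I] [DecidableEq I]
    {A : I → Type*} [∀ i, Fintype (A i)] [∀ i, Nonempty (A i)] [∀ i, DecidableEq (A i)]
    (δ : ℝ) (hδ : 0 < δ) (hδ1 : δ < 1)
    (P : S → (∀ i, A i) → S → ℝ) (hP : IsKernel P)
    (u : I → S → (∀ i, A i) → ℝ)
    (α : ℝ) (hα : 0 ≤ α)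
    (V : I → (∀ j, S → A j → ℝ) → S → ℝ)
    (hV : ∀ i π, IsPolicy π → IsValueFun δ P (u i) π (V i π))
    (Φ : (∀ j, S → A j → ℝ) → S → ℝ)
    (hpot : ∀ (s : S) (i : I) (π : ∀ j, S → A j → ℝ), IsPolicy π →
      ∀ (πi' : S → A i → ℝ), (∀ s', IsProbVec (πi' s')) →
        |(Φ (Function.update π i πi') s - Φ π s) -
          (V i (Function.update π i πi') s - V i π s)| ≤ α)
    (πstar : ∀ j, S → A j → ℝ) (hπstar : IsPolicy πstar)
    (hmax : ∀ (s : S) (π : ∀ j, S → A j → ℝ), IsPolicy π → Φ π s ≤ Φ πstar s) :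
    ∀ (i : I) (πi : S → A i → ℝ), (∀ s, IsProbVec (πi s)) →
      ∀ (μ : S → ℝ), IsProbVec μ →
        (∑ s, μ s * V i πstar s) ≥
          (∑ s, μ s * V i (Function.update πstar i πi) s) - α := by
  exact fun i πi hπi μ hμ => potential_maximizer_is_alpha_nash_general (X := stationaryPolicies S A)
    (fun s i π hπ => hpot s i π (mem_pi_stationaryPolicies.1 hπ))
    (mem_pi_stationaryPolicies.2 hπstar)
    (fun s π hπ => hmax s π (mem_pi_stationaryPolicies.1 hπ)) hμ i πi hπi
end
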